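/- For an instance J with agreeable deadlines and groups G_1, …, G_p determined by the flush times τ_1 < ⋯ < τ_p, consecutive groups satisfy: for every i with 1 ≤ i < p, every job j ∈ G_i has d_j ≤ τ_{i+1}, and for every i with i + 2 ≤ p, τ_{i+1} < min_{j∈G_{i+2}} r_j; in particular max_{j∈G_i} d_j ≤ τ_{i+1} < min_{j∈G_{i+2}} r_j. -/

import Mathlib

structure SchedInstance where
  jobs : Finset ℕ
  r : ℕ → ℤ
  d : ℕ → ℤ
  window : ∀ j ∈ jobs, r j ≤ d j

def Agreeable (P : SchedInstance) : Prop :=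
  ∀ j ∈ P.jobs, ∀ j' ∈ P.jobs, P.r j < P.r j' → P.d j ≤ P.d j'

theorem Agreeable.monovaryOn {P : SchedInstance} (hagree : Agreeable P) :
    MonovaryOn P.d P.r P.jobs :=
  fun j hj k hk hjk => hagree j hj k hk hjk

section

variable {ι α : Type*} [Preorder α] {J : Set ι} {r d : ι → α}

theorem deadline_le_of_release_le (hagree : MonovaryOn d r J) {s t : α}
    (ht : ∃ k ∈ J, s < r k ∧ d k = t) {j : ι} (hj : j ∈ J) (hjs : r j ≤ s) : d j ≤ t := by
  obtain ⟨k, hk, hsk, rfl⟩ := ht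
  exact hagree hj hk (hjs.trans_lt hsk)

theorem mem_jobs_and_release_le_of_mem_group {p : ℕ} {τ : ℕ → α} {G : ℕ → Set ι}
    (hG0 : G 0 = {j ∈ J | r j ≤ τ 0})
    (hGstep : ∀ i, i + 1 < p → G (i + 1) = {j ∈ J | τ i < r j ∧ r j ≤ τ (i + 1)})
    {i : ℕ} (hi : i < p) {j : ι} (hj : j ∈ G i) : j ∈ J ∧ r j ≤ τ i := by
  cases i with
  | zero => rwa [hG0] at hj
  | succ i =>
    rw [hGstep i hi] at hj
    exact ⟨hj.1, hj.2.2⟩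

theorem greedy_consecutive_groups_general (hagree : MonovaryOn d r J)
    {p : ℕ} {τ : ℕ → α} {G : ℕ → Set ι}
    (hτstep : ∀ i, i + 1 < p → ∃ k ∈ J, τ i < r k ∧ d k = τ (i + 1))
    (hG0 : G 0 = {j ∈ J | r j ≤ τ 0})
    (hGstep : ∀ i, i + 1 < p → G (i + 1) = {j ∈ J | τ i < r j ∧ r j ≤ τ (i + 1)}) :
    (∀ i, i + 1 < p → ∀ j ∈ G i, d j ≤ τ (i + 1)) ∧
      (∀ i, i + 2 < p → ∀ j ∈ G (i + 2), τ (i + 1) < r j) := by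
  refine ⟨fun i hi j hj => ?_, fun i hi j hj => ?_⟩
  · obtain ⟨hjJ, hji⟩ :=
      mem_jobs_and_release_le_of_mem_group hG0 hGstep (Nat.lt_of_succ_lt hi) hj
    exact deadline_le_of_release_le hagree (hτstep i hi) hjJ hji
  · rw [hGstep (i + 1) hi] at hj
    exact hj.2.1

end

/-- consecutive Greedy groups satisfy (0-indexed): every job of `G i`
has deadline at most `τ (i+1)` (when `i+1 < p`), and every job of `G (i+2)` has
release time strictly after `τ (i+1)` (when `i+2 < p`); in particular
`max_{j ∈ G i} d j ≤ τ (i+1) < min_{j ∈ G (i+2)} r j`. -/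
theorem greedy_consecutive_groups
    (P : SchedInstance) (hagree : Agreeable P) (hne : P.jobs.Nonempty)
    (p : ℕ) (hp : 0 < p) (τ : ℕ → ℤ) (G : ℕ → Finset ℕ)
    (hτ0 : IsLeast {x : ℤ | ∃ j ∈ P.jobs, P.d j = x} (τ 0))
    (hτstep : ∀ i, i + 1 < p →
      IsLeast {x : ℤ | ∃ j ∈ P.jobs, τ i < P.r j ∧ P.d j = x} (τ (i + 1)))
    (hlast : ∀ j ∈ P.jobs, P.r j ≤ τ (p - 1))
    (hτmono : ∀ i, i + 1 < p → τ i < τ (i + 1))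
    (hG0 : G 0 = P.jobs.filter fun j => P.r j ≤ τ 0)
    (hGstep : ∀ i, i + 1 < p →
      G (i + 1) = P.jobs.filter fun j => τ i < P.r j ∧ P.r j ≤ τ (i + 1)) :
    (∀ i, i + 1 < p → ∀ j ∈ G i, P.d j ≤ τ (i + 1)) ∧
      (∀ i, i + 2 < p → ∀ j ∈ G (i + 2), τ (i + 1) < P.r j) :=
  greedy_consecutive_groups_general (G := fun i => G i) hagree.monovaryOn
    (fun i hi => (hτstep i hi).1) (by simp [hG0]) (fun i hi => by simp [hGstep i hi])
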